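/- arXiv:1407.4208 — 2 statements merged into one kernel-verified Lean document; each statement's English description precedes it below -/
import Mathlib

section
/- For every sequence of nonnegative weights γ = (γ_j)_{j≥1} there exists a constant C > 0 (independent of N and s) such that for all s ∈ ℕ with s ≥ 2 and all N ∈ ℕ one has disc_γ(N,s) ≤ C·(√(log s)/√N)·max_{∅ ≠ u ⊆ [s]} γ_u·√|u|, where γ_u = ∏_{j∈u} γ_j and |u| denotes the cardinality of u. -/
open Finset

/-- Local discrepancy of the point set `x` at the corner point `t`:
`Δ(t) = #{n : x_n ∈ [0,t)}/N − ∏_j t_j`. -/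
noncomputable def localDisc {N s : ℕ} (x : Fin N → Fin s → ℝ) (t : Fin s → ℝ) : ℝ :=
  ((univ.filter fun n => ∀ j, x n j < t j).card : ℝ) / N - ∏ j, t j

/-- `(z_u, 1)`: the vector `z` with all components whose index is not in `u`
replaced by `1`. -/
def projPoint {s : ℕ} (u : Finset (Fin s)) (z : Fin s → ℝ) : Fin s → ℝ :=
  fun j => if j ∈ u then z j else 1

/-- The weight `γ_u = ∏_{j ∈ u} γ_j` of a set of coordinates `u ⊆ {1,…,s}`;
coordinate `j : Fin s` carries weight `γ (j+1)` (weights are indexed from `1`). -/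
noncomputable def weightOf {s : ℕ} (γ : ℕ → ℝ) (u : Finset (Fin s)) : ℝ :=
  ∏ j ∈ u, γ (j.1 + 1)

/-- Weighted star-discrepancy
`D*_γ(x) = sup_{z ∈ [0,1]^s} max_{∅ ≠ u ⊆ [s]} γ_u |Δ(z_u,1)|`. -/
noncomputable def wStarDisc {N s : ℕ} (γ : ℕ → ℝ) (x : Fin N → Fin s → ℝ) : ℝ :=
  sSup {d : ℝ | ∃ z : Fin s → ℝ, (∀ j, z j ∈ Set.Icc (0:ℝ) 1) ∧
    ∃ u : Finset (Fin s), u.Nonempty ∧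
      d = weightOf γ u * |localDisc x (projPoint u z)|}

/-- `N`-th minimal weighted star-discrepancy `disc_γ(N,s)`. -/
noncomputable def wMinDisc (γ : ℕ → ℝ) (N s : ℕ) : ℝ :=
  sInf {d : ℝ | ∃ x : Fin N → Fin s → ℝ,
    (∀ n j, x n j ∈ Set.Ico (0:ℝ) 1) ∧ d = wStarDisc γ x}

/-!
Draw the `N` points independently and uniformly from the grid with `s * 8 ^ K` points per side. A
grid box restricted in the coordinates `u` is a telescoping sum of increments along a chain that
starts with the empty box and then rounds the corner down to multiples of `1 / (s * 8 ^ i)`,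
`i = 0, …, K`. An increment of level `i` has measure at most `8 ^ (1 - i)`, so by a Bernstein-type
bound its empirical measure errs by more than `9 * 2 ^ (-i) * √(10 * |u| * log s / N)` only with
probability at most `2 * s ^ (-10 * |u| * 2 ^ i)`, whereas there are at most
`(s * 8 ^ i + 1) ^ |u|` increments of level `i`. Hence a union bound over all `u`, all levels and
all increments leaves a factor `s ^ (-|u|) * 2 ^ (-i)` whose sum is bounded, with
`∑ u, s ^ (-|u|) = (1 + 1 / s) ^ s ≤ e`: some sample is good for all projections simultaneously.

The Bernstein-type bound for level `i` needs `√(10 * |u| * log s / N) * 4 ^ i ≤ 1`. With `K` the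
largest level allowed for `u = [s]`, replacing an arbitrary box by a grid box costs no more than
the sampling error, and the sets `u` for which even level `0` is excluded satisfy the claim because
the local discrepancy never exceeds `1`.
-/

open scoped BigOperators

section ProductDifference

theorem prod_sub_prod_le_sum_sub {ι R : Type*} [CommRing R] [PartialOrder R] [IsOrderedRing R]
    (S : Finset ι) {f g : ι → R} (hf : ∀ j ∈ S, 0 ≤ f j) (hfg : ∀ j ∈ S, f j ≤ g j)
    (hg : ∀ j ∈ S, g j ≤ 1) : ∏ j ∈ S, g j - ∏ j ∈ S, f j ≤ ∑ j ∈ S, (g j - f j) := by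
  induction S using Finset.cons_induction with
  | empty => simp
  | cons j S hj ih =>
    simp only [mem_cons, forall_eq_or_imp] at hf hfg hg
    have prod_f_le_one : ∏ i ∈ S, f i ≤ 1 :=
      prod_le_one hf.2 fun i hi => (hfg.2 i hi).trans (hg.2 i hi)
    have prod_f_le_prod_g : ∏ i ∈ S, f i ≤ ∏ i ∈ S, g i := prod_le_prod hf.2 hfg.2
    rw [prod_cons, prod_cons, sum_cons]
    calc g j * ∏ i ∈ S, g i - f j * ∏ i ∈ S, f i
        = (g j - f j) * ∏ i ∈ S, f i + g j * (∏ i ∈ S, g i - ∏ i ∈ S, f i) := by ring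
      _ ≤ (g j - f j) + (∏ i ∈ S, g i - ∏ i ∈ S, f i) :=
          add_le_add (mul_le_of_le_one_right (sub_nonneg.2 hfg.1) prod_f_le_one)
            (mul_le_of_le_one_left (sub_nonneg.2 prod_f_le_prod_g) hg.1)
      _ ≤ (g j - f j) + ∑ i ∈ S, (g i - f i) := by gcongr; exact ih hf.2 hfg.2 hg.2

end ProductDifference

section RandomSample

variable {α : Type*} [Fintype α] {N : ℕ}

/-- The error made when the average of `f` over `α` is estimated by its average over the
sample `x`. -/
noncomputable def empiricalError (x : Fin N → α) (f : α → ℝ) : ℝ :=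
  𝔼 n, f (x n) - 𝔼 a, f a

theorem empiricalError_sum {κ : Type*} (x : Fin N → α) (S : Finset κ) (f : κ → α → ℝ) :
    empiricalError x (fun a => ∑ k ∈ S, f k a) = ∑ k ∈ S, empiricalError x (f k) := by
  simp only [empiricalError, expect_sum_comm, sum_sub_distrib]

theorem natCast_mul_empiricalError (x : Fin N → α) (f : α → ℝ) :
    N * empiricalError x f = ∑ n, (f (x n) - 𝔼 a, f a) := by
  have sample_sum : N * 𝔼 n, f (x n) = ∑ n, f (x n) := by
    simpa using Fintype.card_mul_expect fun n => f (x n)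
  simp [empiricalError, mul_sub, sample_sum]

theorem exp_mul_le_one_add_mul {t : ℝ} (ht : t ∈ Set.Icc (0 : ℝ) 1) (θ : ℝ) :
    Real.exp (θ * t) ≤ 1 + t * (Real.exp θ - 1) := by
  have chord := convexOn_exp.2 (Set.mem_univ 0) (Set.mem_univ θ) (sub_nonneg.2 ht.2) ht.1
    (sub_add_cancel 1 t)
  simp only [smul_eq_mul, mul_zero, zero_add, Real.exp_zero, mul_one] at chord
  rw [mul_comm θ t]
  linarith

theorem expect_exp_mul_sub_expect_le [Nonempty α] {f : α → ℝ}
    (hf : ∀ a, f a ∈ Set.Icc (0 : ℝ) 1) {θ : ℝ} (hθ : |θ| ≤ 1) :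
    𝔼 a, Real.exp (θ * (f a - 𝔼 b, f b)) ≤ Real.exp ((𝔼 a, f a) * θ ^ 2) := by
  set μ := 𝔼 a, f a with hμ
  have hμ0 : 0 ≤ μ := expect_nonneg fun a _ => (hf a).1
  have exp_sub_one_sub_le : Real.exp θ - 1 - θ ≤ θ ^ 2 :=
    (le_abs_self _).trans (Real.abs_exp_sub_one_sub_id_le hθ)
  calc 𝔼 a, Real.exp (θ * (f a - μ))
      = (𝔼 a, Real.exp (θ * f a)) * Real.exp (-(μ * θ)) := by
        rw [expect_mul]
        refine expect_congr rfl fun a _ => ?_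
        rw [← Real.exp_add]; ring_nf
    _ ≤ (𝔼 a, (1 + f a * (Real.exp θ - 1))) * Real.exp (-(μ * θ)) := by
        gcongr with a
        exact exp_mul_le_one_add_mul (hf a) θ
    _ = (μ * (Real.exp θ - 1) + 1) * Real.exp (-(μ * θ)) := by
        rw [expect_add_distrib, ← expect_mul, Fintype.expect_const, ← hμ, add_comm]
    _ ≤ Real.exp (μ * (Real.exp θ - 1)) * Real.exp (-(μ * θ)) := by
        gcongr
        exact Real.add_one_le_exp _
    _ = Real.exp (μ * (Real.exp θ - 1 - θ)) := by rw [← Real.exp_add]; ring_nf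
    _ ≤ Real.exp (μ * θ ^ 2) := by gcongr

theorem expect_exp_empiricalError_le [Nonempty α] {f : α → ℝ}
    (hf : ∀ a, f a ∈ Set.Icc (0 : ℝ) 1) {θ : ℝ} (hθ : |θ| ≤ 1) :
    𝔼 x : Fin N → α, Real.exp (θ * (N * empiricalError x f)) ≤
      Real.exp (N * (𝔼 a, f a) * θ ^ 2) := by
  calc 𝔼 x : Fin N → α, Real.exp (θ * (N * empiricalError x f))
      = 𝔼 x : Fin N → α, ∏ n, Real.exp (θ * (f (x n) - 𝔼 a, f a)) := by
        simp only [natCast_mul_empiricalError, mul_sum, Real.exp_sum]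
    _ = (𝔼 a, Real.exp (θ * (f a - 𝔼 b, f b))) ^ N := by
        rw [expect_pow, Fintype.piFinset_univ]
    _ ≤ Real.exp ((𝔼 a, f a) * θ ^ 2) ^ N := by
        gcongr
        exact expect_exp_mul_sub_expect_le hf hθ
    _ = Real.exp (N * (𝔼 a, f a) * θ ^ 2) := by rw [← Real.exp_nat_mul, mul_assoc]

theorem expect_exp_abs_empiricalError_le [Nonempty α] {f : α → ℝ}
    (hf : ∀ a, f a ∈ Set.Icc (0 : ℝ) 1) {θ : ℝ} (hθ : |θ| ≤ 1) :
    𝔼 x : Fin N → α, Real.exp |θ * (N * empiricalError x f)| ≤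
      2 * Real.exp (N * (𝔼 a, f a) * θ ^ 2) := by
  have upper_tail := expect_exp_empiricalError_le (N := N) hf hθ
  have lower_tail := expect_exp_empiricalError_le (N := N) hf (θ := -θ) (by rwa [abs_neg])
  rw [neg_sq] at lower_tail
  calc 𝔼 x : Fin N → α, Real.exp |θ * (N * empiricalError x f)|
      ≤ 𝔼 x : Fin N → α, (Real.exp (θ * (N * empiricalError x f)) +
          Real.exp (-θ * (N * empiricalError x f))) :=
        expect_le_expect fun x _ => by simpa only [neg_mul] using Real.exp_abs_le _
    _ ≤ 2 * Real.exp (N * (𝔼 a, f a) * θ ^ 2) := by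
        rw [expect_add_distrib]
        linarith

-- Chernoff's method: some sample keeps the sum of all exponential moments below its average.
theorem exists_forall_abs_empiricalError_lt [Nonempty α] {κ : Type*} (N : ℕ) (T : Finset κ)
    (f : κ → α → ℝ) {q θ δ : κ → ℝ} (hf : ∀ k ∈ T, ∀ a, f k a ∈ Set.Icc (0 : ℝ) 1)
    (hq : ∀ k ∈ T, 𝔼 a, f k a ≤ q k) (hθ : ∀ k ∈ T, θ k ∈ Set.Icc (0 : ℝ) 1)
    (hsum : ∑ k ∈ T, 2 * Real.exp (N * q k * θ k ^ 2 - θ k * (N * δ k)) < 1) :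
    ∃ x : Fin N → α, ∀ k ∈ T, |empiricalError x (f k)| < δ k := by
  let moment (x : Fin N → α) (k : κ) : ℝ :=
    Real.exp (|θ k * (N * empiricalError x (f k))| - θ k * (N * δ k))
  have expect_moment_le : ∀ k ∈ T, 𝔼 x, moment x k ≤
      2 * Real.exp (N * q k * θ k ^ 2 - θ k * (N * δ k)) := fun k hk => by
    have abs_θ_le : |θ k| ≤ 1 := abs_le.2 ⟨by linarith [(hθ k hk).1], (hθ k hk).2⟩
    have exp_mean_le : Real.exp (N * (𝔼 a, f k a) * θ k ^ 2) ≤ Real.exp (N * q k * θ k ^ 2) := by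
      gcongr
      exact hq k hk
    calc 𝔼 x, moment x k
        = (𝔼 x : Fin N → α, Real.exp |θ k * (N * empiricalError x (f k))|) *
            Real.exp (-(θ k * (N * δ k))) := by
          simp only [moment, sub_eq_add_neg, Real.exp_add, expect_mul]
      _ ≤ 2 * Real.exp (N * q k * θ k ^ 2) * Real.exp (-(θ k * (N * δ k))) := by
          gcongr
          linarith [expect_exp_abs_empiricalError_le (N := N) (hf k hk) abs_θ_le]
      _ = 2 * Real.exp (N * q k * θ k ^ 2 - θ k * (N * δ k)) := by
          rw [sub_eq_add_neg, Real.exp_add, mul_assoc]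
  have expect_sum_lt_one : 𝔼 x, ∑ k ∈ T, moment x k < 1 := by
    rw [expect_sum_comm]
    exact (sum_le_sum expect_moment_le).trans_lt hsum
  obtain ⟨x, -, hx⟩ := exists_lt_of_expect_lt univ_nonempty expect_sum_lt_one
  refine ⟨x, fun k hk => ?_⟩
  have moment_lt_one : moment x k < 1 :=
    (single_le_sum (f := moment x) (fun k _ => (Real.exp_pos _).le) hk).trans_lt hx
  rw [Real.exp_lt_one_iff, sub_neg, abs_mul, abs_mul, abs_of_nonneg (hθ k hk).1, Nat.abs_cast,
    ← mul_assoc, ← mul_assoc] at moment_lt_one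
  exact lt_of_mul_lt_mul_left moment_lt_one (mul_nonneg (hθ k hk).1 N.cast_nonneg)

end RandomSample

section GridBoxes

variable {ι : Type*} [Fintype ι] {M : ℕ}

/-- The indicator function of the anchored box `[0, c)` on the grid `{0, …, M - 1}^ι`. -/
noncomputable def boxIndicator (c : ι → ℕ) (y : ι → Fin M) : ℝ :=
  if ∀ j, (y j : ℕ) < c j then 1 else 0

theorem boxIndicator_zero [Nonempty ι] (y : ι → Fin M) : boxIndicator 0 y = 0 :=
  if_neg fun h => Nat.not_lt_zero _ (h (Classical.arbitrary ι))

theorem boxIndicator_sub_mem_Icc {c c' : ι → ℕ} (hc : c' ≤ c) (y : ι → Fin M) :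
    boxIndicator c y - boxIndicator c' y ∈ Set.Icc (0 : ℝ) 1 := by
  have mem_of_mem : (∀ j, (y j : ℕ) < c' j) → ∀ j, (y j : ℕ) < c j :=
    fun h j => (h j).trans_le (hc j)
  unfold boxIndicator
  split_ifs <;> simp_all

variable [DecidableEq ι]

theorem expect_boxIndicator {c : ι → ℕ} (hc : ∀ j, c j ≤ M) :
    𝔼 y : ι → Fin M, boxIndicator c y = ∏ j, (c j / M : ℝ) := by
  have box_eq_piFinset : (univ.filter fun y : ι → Fin M => ∀ j, (y j : ℕ) < c j) =
      Fintype.piFinset fun j => univ.filter fun v : Fin M => (v : ℕ) < c j := by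
    ext y
    simp only [mem_filter, mem_univ, true_and, Fintype.mem_piFinset]
  have card_side (j : ι) : (univ.filter fun v : Fin M => (v : ℕ) < c j).card = c j := by
    rw [Fin.card_filter_val_lt, min_eq_right (hc j)]
  simp only [Fintype.expect_eq_sum_div_card, boxIndicator, sum_boole, box_eq_piFinset,
    Fintype.card_piFinset, card_side, Fintype.card_pi, Fintype.card_fin, Nat.cast_prod,
    prod_div_distrib]

theorem expect_boxIndicator_sub_le {c c' : ι → ℕ} (hc' : c' ≤ c) (hc : ∀ j, c j ≤ M) {D : ℕ}
    (hD : ∀ j, c j ≤ c' j + D) :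
    𝔼 y : ι → Fin M, (boxIndicator c y - boxIndicator c' y) ≤ Fintype.card ι * (D / M) := by
  have side_le_one (j : ι) : (c j / M : ℝ) ≤ 1 :=
    div_le_one_of_le₀ (mod_cast hc j) M.cast_nonneg
  have side_sub_le (j : ι) : (c j / M : ℝ) - c' j / M ≤ D / M := by
    rw [← sub_div]
    gcongr
    rw [sub_le_iff_le_add']
    exact_mod_cast hD j
  calc 𝔼 y : ι → Fin M, (boxIndicator c y - boxIndicator c' y)
      = ∏ j, (c j / M : ℝ) - ∏ j, (c' j / M : ℝ) := by
        rw [expect_sub_distrib, expect_boxIndicator hc,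
          expect_boxIndicator fun j => (hc' j).trans (hc j)]
    _ ≤ ∑ j, ((c j / M : ℝ) - c' j / M) :=
        prod_sub_prod_le_sum_sub univ (fun j _ => by positivity)
          (fun j _ => by gcongr; exact hc' j) (fun j _ => side_le_one j)
    _ ≤ ∑ _j : ι, (D / M : ℝ) := sum_le_sum fun j _ => side_sub_le j
    _ = Fintype.card ι * (D / M) := by rw [sum_const, card_univ, nsmul_eq_mul]

/-- The corners of the anchored boxes in the grid of side length `m` that are restricted in the
coordinates `u` only. -/
def gridCorners (u : Finset ι) (m : ℕ) : Finset (ι → ℕ) :=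
  Fintype.piFinset fun j => if j ∈ u then range (m + 1) else {m}

theorem mem_gridCorners {u : Finset ι} {m : ℕ} {c : ι → ℕ} :
    c ∈ gridCorners u m ↔ (∀ j, c j ≤ m) ∧ ∀ j ∉ u, c j = m := by
  simp only [gridCorners, Fintype.mem_piFinset, ← forall_and]
  refine forall_congr' fun j => ?_
  split_ifs with hj
  · simp only [mem_range, Nat.lt_succ_iff, hj, not_true, false_imp_iff, and_true]
  · simpa only [mem_singleton, hj, not_false_iff, true_imp_iff] using
      ⟨fun h => ⟨h.le, h⟩, And.right⟩

theorem card_gridCorners (u : Finset ι) (m : ℕ) :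
    (gridCorners u m).card = (m + 1) ^ u.card := by
  simp only [gridCorners, Fintype.card_piFinset, apply_ite card, card_range, card_singleton,
    prod_ite_mem, univ_inter, prod_const]

end GridBoxes

section Chaining

variable {ι : Type*} {K : ℕ}

/-- The `i`-th approximation from below of the corner `a` in the chain from `0` to `a`: the chain
starts at `0`, its next element rounds `a` down to multiples of `8 ^ K`, and each further step
refines the rounding by a factor `8`, so that `a` itself is element number `K + 1`. -/
def chainCorner (K : ℕ) : ℕ → (ι → ℕ) → ι → ℕ
  | 0, _ => 0
  | i + 1, a => fun j => a j / 8 ^ (K - i) * 8 ^ (K - i)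

theorem chainCorner_last (a : ι → ℕ) : chainCorner K (K + 1) a = a := by
  simp only [chainCorner, Nat.sub_self, pow_zero, Nat.div_one, mul_one]

theorem chainCorner_le (i : ℕ) (a : ι → ℕ) : chainCorner K i a ≤ a := by
  cases i with
  | zero => exact fun j => Nat.zero_le _
  | succ i => exact fun j => Nat.div_mul_le_self _ _

theorem chainCorner_chainCorner {i k : ℕ} (hik : i ≤ k) (a : ι → ℕ) :
    chainCorner K i (chainCorner K k a) = chainCorner K i a := by
  match i, k with
  | 0, _ => rfl
  | i + 1, k + 1 =>
    obtain ⟨r, hr⟩ : 8 ^ (K - k) ∣ 8 ^ (K - i) := pow_dvd_pow 8 (by omega)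
    funext j
    simp only [chainCorner, hr, ← Nat.div_div_eq_div_mul,
      Nat.mul_div_cancel _ (show 0 < 8 ^ (K - k) by positivity)]

theorem chainCorner_le_chainCorner_succ (i : ℕ) (a : ι → ℕ) :
    chainCorner K i a ≤ chainCorner K (i + 1) a :=
  chainCorner_chainCorner i.le_succ a ▸ chainCorner_le i _

theorem chainCorner_succ_le_add (i : ℕ) (a : ι → ℕ) (j : ι) :
    chainCorner K (i + 2) a j ≤ chainCorner K (i + 1) a j + 8 ^ (K - i) :=
  (chainCorner_le _ a j).trans (Nat.lt_div_mul_add (by positivity)).le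

variable [Fintype ι] {M : ℕ}

/-- The indicator function of the difference of two consecutive boxes in the chain from `0` to
`a`. -/
noncomputable def chainIncrement (K i : ℕ) (a : ι → ℕ) (y : ι → Fin M) : ℝ :=
  boxIndicator (chainCorner K (i + 1) a) y - boxIndicator (chainCorner K i a) y

theorem sum_chainIncrement [Nonempty ι] (a : ι → ℕ) (y : ι → Fin M) :
    ∑ i ∈ range (K + 1), chainIncrement K i a y = boxIndicator a y := by
  unfold chainIncrement
  rw [sum_range_sub fun i => boxIndicator (chainCorner K i a) y, chainCorner_last, chainCorner,
    boxIndicator_zero, sub_zero]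

theorem chainIncrement_mem_Icc (i : ℕ) (a : ι → ℕ) (y : ι → Fin M) :
    chainIncrement K i a y ∈ Set.Icc (0 : ℝ) 1 :=
  boxIndicator_sub_mem_Icc (chainCorner_le_chainCorner_succ i a) y

theorem chainIncrement_chainCorner (i : ℕ) (a : ι → ℕ) :
    chainIncrement (M := M) K i (chainCorner K (i + 1) a) = chainIncrement K i a := by
  funext y
  simp only [chainIncrement, chainCorner_chainCorner le_rfl, chainCorner_chainCorner i.le_succ]

theorem expect_chainIncrement_le {s i : ℕ} (hi : i ≤ K) {a : Fin s → ℕ}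
    (ha : ∀ j, a j ≤ s * 8 ^ K) :
    𝔼 y : Fin s → Fin (s * 8 ^ K), chainIncrement K i a y ≤ 8 * (1 / 8) ^ i := by
  cases i with
  | zero =>
    rcases isEmpty_or_nonempty (Fin s → Fin (s * 8 ^ K)) with _ | _
    · simp
    · exact expect_le univ_nonempty fun y _ =>
        (chainIncrement_mem_Icc 0 a y).2.trans (by norm_num)
  | succ i =>
    calc 𝔼 y : Fin s → Fin (s * 8 ^ K), chainIncrement K (i + 1) a y
        ≤ Fintype.card (Fin s) * (((8 ^ (K - i) : ℕ) : ℝ) / ((s * 8 ^ K : ℕ) : ℝ)) :=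
          expect_boxIndicator_sub_le (chainCorner_le_chainCorner_succ _ a)
            (fun j => (chainCorner_le _ a j).trans (ha j)) (chainCorner_succ_le_add i a)
      _ = s / s * ((8 : ℝ) ^ (K - i) / 8 ^ K) := by
          rw [Fintype.card_fin, div_mul_div_comm, mul_div_assoc]
          norm_cast
      _ ≤ 1 * ((8 : ℝ) ^ (K - i) / 8 ^ K) := by
          gcongr
          exact div_self_le_one _
      _ = 8 * (1 / 8) ^ (i + 1) := by
          rw [pow_sub₀ _ (by norm_num) (by omega), pow_succ, one_div, inv_pow]
          field_simp

open Classical in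
/-- All the increments that occur at stage `i` of the chains ending at a box restricted in the
coordinates `u` only. -/
noncomputable def chainIncrements (s K i : ℕ) (u : Finset (Fin s)) :
    Finset ((Fin s → Fin (s * 8 ^ K)) → ℝ) :=
  (gridCorners u (s * 8 ^ K)).image (chainIncrement K i)

theorem card_chainIncrements_le {s i : ℕ} (hi : i ≤ K) (u : Finset (Fin s)) :
    (chainIncrements s K i u).card ≤ (s * 8 ^ i + 1) ^ u.card := by
  classical
  have mesh_eq : s * 8 ^ K = s * 8 ^ i * 8 ^ (K - i) := by
    rw [mul_assoc, ← pow_add, Nat.add_sub_cancel' hi]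
  have increments_subset : chainIncrements s K i u ⊆ (gridCorners u (s * 8 ^ i)).image
      fun c => chainIncrement K i fun j => c j * 8 ^ (K - i) := by
    refine image_subset_iff.2 fun a ha => ?_
    rw [mem_gridCorners, mesh_eq] at ha
    refine mem_image.2 ⟨fun j => a j / 8 ^ (K - i), mem_gridCorners.2 ⟨fun j => ?_, fun j hj => ?_⟩,
      chainIncrement_chainCorner i a⟩
    · exact Nat.div_le_of_le_mul (mul_comm (s * 8 ^ i) _ ▸ ha.1 j)
    · simp only [ha.2 j hj]
      exact Nat.mul_div_cancel _ (by positivity)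
  calc (chainIncrements s K i u).card
      ≤ _ := card_le_card increments_subset
    _ ≤ (gridCorners u (s * 8 ^ i)).card := card_image_le
    _ = (s * 8 ^ i + 1) ^ u.card := card_gridCorners u _

end Chaining

section UnionBound

variable {N s d : ℕ}

/-- The order of magnitude `√(10 d log s / N)` of the local discrepancy of random point sets in
the `d`-dimensional projections. -/
noncomputable def deviationScale (N s d : ℕ) : ℝ :=
  Real.sqrt (10 * d * Real.log s / N)

theorem deviationScale_nonneg : 0 ≤ deviationScale N s d :=
  Real.sqrt_nonneg _

theorem natCast_mul_sq_deviationScale (hN : N ≠ 0) :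
    N * deviationScale N s d ^ 2 = 10 * d * Real.log s := by
  have : 0 ≤ Real.log s := Real.log_natCast_nonneg s
  rw [deviationScale, Real.sq_sqrt (by positivity)]
  field_simp

theorem deviationScale_mono (N s : ℕ) : Monotone (deviationScale N s) := fun d e hde => by
  have : 0 ≤ Real.log s := Real.log_natCast_nonneg s
  unfold deviationScale
  gcongr

theorem deviationScale_pos (hN : N ≠ 0) (hs : 2 ≤ s) (hd : d ≠ 0) : 0 < deviationScale N s d := by
  have : 0 < Real.log s := Real.log_pos (mod_cast hs)
  unfold deviationScale
  positivity

theorem deviationScale_eq_mul (N s d : ℕ) : deviationScale N s d =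
    Real.sqrt 10 * (Real.sqrt (Real.log s) / Real.sqrt N) * Real.sqrt d := by
  rw [deviationScale, Real.sqrt_div' _ N.cast_nonneg, Real.sqrt_mul (by positivity),
    Real.sqrt_mul (by positivity)]
  ring

theorem sum_one_div_card_pow_le_exp_one (ι : Type*) [Fintype ι] :
    ∑ u : Finset ι, (1 / (Fintype.card ι : ℝ)) ^ u.card ≤ Real.exp 1 := by
  set s := Fintype.card ι
  have binomial := Fintype.sum_pow_mul_eq_add_pow ι (1 / (s : ℝ)) 1
  simp only [one_pow, mul_one] at binomial
  calc ∑ u : Finset ι, (1 / (s : ℝ)) ^ u.card = (1 / (s : ℝ) + 1) ^ s := binomial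
    _ ≤ Real.exp (1 / s) ^ s := by gcongr; exact Real.add_one_le_exp _
    _ = Real.exp (s / s) := by rw [← Real.exp_nat_mul, mul_one_div]
    _ ≤ Real.exp 1 := by gcongr; exact div_self_le_one _

theorem mul_eight_pow_add_one_le (hs : 2 ≤ s) (i : ℕ) : s * 8 ^ i + 1 ≤ s ^ (2 + 3 * i) :=
  calc s * 8 ^ i + 1 ≤ s * 8 ^ i * 2 := by
        have : 1 ≤ s * 8 ^ i := Nat.mul_pos (by omega) (by positivity)
        omega
    _ = s * 2 * 2 ^ (3 * i) := by rw [pow_mul]; ring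
    _ ≤ s * s * s ^ (3 * i) := by gcongr
    _ = s ^ (2 + 3 * i) := by ring

theorem card_mul_exp_neg_le (hs : 2 ≤ s) (hd : d ≠ 0) (i : ℕ) :
    ((s * 8 ^ i + 1) ^ d : ℕ) * (2 * Real.exp (-(10 * d * Real.log s * 2 ^ i))) ≤
      (1 / s) ^ d * (1 / 64 * (1 / 2) ^ i) := by
  have s_pos : (0 : ℝ) < s := by positivity
  have exp_eq : Real.exp (-(10 * d * Real.log s * 2 ^ i)) = ((s : ℝ) ^ (10 * d * 2 ^ i))⁻¹ := by
    rw [Real.exp_neg, ← Real.exp_log (pow_pos s_pos _), Real.log_pow]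
    push_cast
    ring_nf
  have exponent_le : d * (2 + 3 * i) + d + (7 + i) ≤ 10 * d * 2 ^ i := by
    have : d * (i + 1) ≤ d * 2 ^ i := Nat.mul_le_mul_left d Nat.lt_two_pow_self
    have : 1 * i ≤ d * i := Nat.mul_le_mul_right i (Nat.pos_of_ne_zero hd)
    grind
  have count_le : (((s * 8 ^ i + 1) ^ d : ℕ) : ℝ) ≤ s ^ (d * (2 + 3 * i)) := by
    rw [mul_comm d, pow_mul]
    exact_mod_cast Nat.pow_le_pow_left (mul_eight_pow_add_one_le hs i) d
  calc (((s * 8 ^ i + 1) ^ d : ℕ) : ℝ) * (2 * Real.exp (-(10 * d * Real.log s * 2 ^ i)))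
      ≤ (s : ℝ) ^ (d * (2 + 3 * i)) * (2 * ((s : ℝ) ^ (d * (2 + 3 * i) + d + (7 + i)))⁻¹) := by
        rw [exp_eq]
        gcongr
        exact_mod_cast (by omega : 1 ≤ s)
    _ = (1 / s) ^ d * (2 * ((s : ℝ) ^ (7 + i))⁻¹) := by
        rw [pow_add, pow_add, one_div, inv_pow]
        field_simp
    _ ≤ (1 / s) ^ d * (2 * ((2 : ℝ) ^ (7 + i))⁻¹) := by
        gcongr
        exact_mod_cast hs
    _ = (1 / s) ^ d * (1 / 64 * (1 / 2) ^ i) := by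
        rw [pow_add, one_div_pow (2 : ℝ), mul_inv]
        ring

theorem sum_card_chainIncrements_mul_exp_lt_one (hs : 2 ≤ s) (K : ℕ) :
    ∑ u : Finset (Fin s) with u.Nonempty, ∑ i ∈ range (K + 1), (chainIncrements s K i u).card *
      (2 * Real.exp (-(10 * u.card * Real.log s * 2 ^ i))) < 1 := by
  calc ∑ u : Finset (Fin s) with u.Nonempty, ∑ i ∈ range (K + 1), (chainIncrements s K i u).card *
        (2 * Real.exp (-(10 * u.card * Real.log s * 2 ^ i)))
      ≤ ∑ u : Finset (Fin s) with u.Nonempty, ∑ i ∈ range (K + 1),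
          (1 / s : ℝ) ^ u.card * (1 / 64 * (1 / 2) ^ i) := by
        refine sum_le_sum fun u hu => sum_le_sum fun i hi => ?_
        refine le_trans ?_ (card_mul_exp_neg_le hs (mem_filter.1 hu).2.card_ne_zero i)
        gcongr
        exact card_chainIncrements_le (mem_range_succ_iff.1 hi) u
    _ ≤ ∑ u : Finset (Fin s), ∑ i ∈ range (K + 1), (1 / s : ℝ) ^ u.card * (1 / 64 * (1 / 2) ^ i) :=
        sum_le_sum_of_subset_of_nonneg (filter_subset _ _) fun _ _ _ => by positivity
    _ = (∑ u : Finset (Fin s), (1 / s : ℝ) ^ u.card) *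
          (1 / 64 * ∑ i ∈ range (K + 1), (1 / 2) ^ i) := by
        rw [mul_sum, sum_mul_sum]
    _ ≤ 3 * (1 / 64 * 2) := by
        gcongr
        · simpa using (sum_one_div_card_pow_le_exp_one (Fin s)).trans Real.exp_one_lt_three.le
        · exact sum_geometric_two_le _
    _ < 1 := by norm_num

theorem chernoff_exponent_eq (hN : N ≠ 0) (i : ℕ) :
    N * (8 * (1 / 8) ^ i) * (deviationScale N s d * 4 ^ i) ^ 2 -
      deviationScale N s d * 4 ^ i * (N * (9 * deviationScale N s d * (1 / 2) ^ i)) =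
    -(10 * d * Real.log s * 2 ^ i) := by
  have variance_pow : (1 / 8 : ℝ) ^ i * (4 ^ i) ^ 2 = 2 ^ i := by
    rw [pow_right_comm, ← mul_pow]
    norm_num
  have deviation_pow : (4 : ℝ) ^ i * (1 / 2) ^ i = 2 ^ i := by
    rw [← mul_pow]
    norm_num
  linear_combination (-(2 : ℝ) ^ i) * natCast_mul_sq_deviationScale (s := s) (d := d) hN +
    N * deviationScale N s d ^ 2 * (8 * variance_pow - 9 * deviation_pow)

theorem exists_forall_abs_empiricalError_chainIncrement_lt (hN : N ≠ 0) (hs : 2 ≤ s) (K : ℕ) :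
    ∃ y : Fin N → Fin s → Fin (s * 8 ^ K), ∀ u : Finset (Fin s), u.Nonempty → ∀ i ≤ K,
      deviationScale N s u.card * 4 ^ i ≤ 1 → ∀ a ∈ gridCorners u (s * 8 ^ K),
        |empiricalError y (chainIncrement K i a)| <
          9 * deviationScale N s u.card * (1 / 2) ^ i := by
  classical
  have : Nonempty (Fin (s * 8 ^ K)) := ⟨⟨0, by positivity⟩⟩
  let allIncrements : Finset (Σ _ : Finset (Fin s), Σ _ : ℕ, (Fin s → Fin (s * 8 ^ K)) → ℝ) :=
    ({u | u.Nonempty} : Finset (Finset (Fin s))).sigma fun u =>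
      (range (K + 1)).sigma fun i => chainIncrements s K i u
  let T := allIncrements.filter fun k => deviationScale N s k.1.card * 4 ^ k.2.1 ≤ 1
  have mem_T {u : Finset (Fin s)} {i : ℕ} {f} : ⟨u, i, f⟩ ∈ T ↔ (u.Nonempty ∧ i ≤ K ∧
      ∃ a ∈ gridCorners u (s * 8 ^ K), chainIncrement K i a = f) ∧
      deviationScale N s u.card * 4 ^ i ≤ 1 := by
    simp only [T, allIncrements, chainIncrements, mem_filter, mem_sigma, mem_univ, true_and,
      mem_range, Nat.lt_succ_iff, mem_image]
  have sum_exp_lt_one :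
      ∑ k ∈ T, 2 * Real.exp (-(10 * k.1.card * Real.log s * 2 ^ k.2.1)) < 1 := by
    refine (sum_le_sum_of_subset_of_nonneg (filter_subset _ allIncrements)
      fun _ _ _ => by positivity).trans_lt ?_
    simpa only [allIncrements, sum_sigma, sum_const, nsmul_eq_mul] using
      sum_card_chainIncrements_mul_exp_lt_one hs K
  obtain ⟨y, hy⟩ := exists_forall_abs_empiricalError_lt N T (fun k => k.2.2)
    (q := fun k => 8 * (1 / 8) ^ k.2.1) (θ := fun k => deviationScale N s k.1.card * 4 ^ k.2.1)
    (δ := fun k => 9 * deviationScale N s k.1.card * (1 / 2) ^ k.2.1)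
    (by
      rintro ⟨u, i, f⟩ hk
      obtain ⟨⟨-, -, a, -, rfl⟩, -⟩ := mem_T.1 hk
      exact chainIncrement_mem_Icc i a)
    (by
      rintro ⟨u, i, f⟩ hk
      obtain ⟨⟨-, hi, a, ha, rfl⟩, -⟩ := mem_T.1 hk
      exact expect_chainIncrement_le hi (mem_gridCorners.1 ha).1)
    (fun k hk => ⟨mul_nonneg deviationScale_nonneg (by positivity), (mem_T.1 hk).2⟩)
    (by simpa only [chernoff_exponent_eq hN] using sum_exp_lt_one)
  exact ⟨y, fun u hu i hi hui a ha => hy ⟨u, i, _⟩ (mem_T.2 ⟨⟨hu, hi, a, ha, rfl⟩, hui⟩)⟩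

theorem exists_forall_abs_empiricalError_boxIndicator_le (hN : N ≠ 0) (hs : 2 ≤ s) (K : ℕ) :
    ∃ y : Fin N → Fin s → Fin (s * 8 ^ K), ∀ u : Finset (Fin s), u.Nonempty →
      (∀ i ≤ K, deviationScale N s u.card * 4 ^ i ≤ 1) → ∀ a ∈ gridCorners u (s * 8 ^ K),
        |empiricalError y (boxIndicator a)| ≤ 18 * deviationScale N s u.card := by
  obtain ⟨y, hy⟩ := exists_forall_abs_empiricalError_chainIncrement_lt hN hs K
  refine ⟨y, fun u hu hK a ha => ?_⟩
  have : Nonempty (Fin s) := hu.to_type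
  have η_nonneg : 0 ≤ deviationScale N s u.card := deviationScale_nonneg
  calc |empiricalError y (boxIndicator a)|
      = |∑ i ∈ range (K + 1), empiricalError y (chainIncrement K i a)| := by
        rw [← empiricalError_sum]
        simp only [sum_chainIncrement]
    _ ≤ ∑ i ∈ range (K + 1), |empiricalError y (chainIncrement K i a)| := abs_sum_le_sum_abs _ _
    _ ≤ ∑ i ∈ range (K + 1), 9 * deviationScale N s u.card * (1 / 2) ^ i :=
        sum_le_sum fun i hi =>
          have hi := mem_range_succ_iff.1 hi
          (hy u hu i hi (hK i hi) a ha).le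
    _ ≤ 9 * deviationScale N s u.card * 2 := by
        rw [← mul_sum]
        gcongr
        exact sum_geometric_two_le _
    _ = 18 * deviationScale N s u.card := by ring

end UnionBound

section LocalDiscrepancy

variable {N s : ℕ}

theorem abs_localDisc_le_one (x : Fin N → Fin s → ℝ) {t : Fin s → ℝ}
    (ht : ∀ j, t j ∈ Set.Icc (0 : ℝ) 1) : |localDisc x t| ≤ 1 := by
  have card_le : ((univ.filter fun n => ∀ j, x n j < t j).card : ℝ) ≤ N := by
    exact_mod_cast (card_filter_le _ _).trans_eq (card_fin N)
  exact abs_sub_le_of_nonneg_of_le (by positivity) (div_le_one_of_le₀ card_le N.cast_nonneg)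
    (prod_nonneg fun j _ => (ht j).1) (prod_le_one (fun j _ => (ht j).1) fun j _ => (ht j).2)

theorem ceil_mul_mem_gridCorners {M : ℕ} {u : Finset (Fin s)} {t : Fin s → ℝ}
    (ht : ∀ j, t j ≤ 1) (htu : ∀ j ∉ u, t j = 1) :
    (fun j => ⌈t j * M⌉₊) ∈ gridCorners u M :=
  mem_gridCorners.2 ⟨fun j => Nat.ceil_le.2 (mul_le_of_le_one_left M.cast_nonneg (ht j)),
    fun j hj => by rw [htu j hj, one_mul, Nat.ceil_natCast]⟩

theorem prod_ceil_div_sub_prod_mem_Icc {M : ℕ} (hM : M ≠ 0) {u : Finset (Fin s)} {t : Fin s → ℝ}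
    (ht : ∀ j, t j ∈ Set.Icc (0 : ℝ) 1) (htu : ∀ j ∉ u, t j = 1) :
    ∏ j, (⌈t j * M⌉₊ / M : ℝ) - ∏ j, t j ∈ Set.Icc (0 : ℝ) (u.card / M) := by
  have M_pos : (0 : ℝ) < M := by positivity
  have le_side (j : Fin s) : t j ≤ ⌈t j * M⌉₊ / M := (le_div_iff₀ M_pos).2 (Nat.le_ceil _)
  have side_le_one (j : Fin s) : (⌈t j * M⌉₊ / M : ℝ) ≤ 1 :=
    (div_le_one M_pos).2 (mod_cast (mem_gridCorners.1
      (ceil_mul_mem_gridCorners (fun j => (ht j).2) htu)).1 j)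
  have side_sub_le (j : Fin s) : (⌈t j * M⌉₊ / M : ℝ) - t j ≤ 1 / M := by
    rw [sub_le_iff_le_add, div_le_iff₀ M_pos, add_mul, one_div_mul_cancel M_pos.ne', add_comm]
    exact (Nat.ceil_lt_add_one (mul_nonneg (ht j).1 M_pos.le)).le
  refine ⟨sub_nonneg.2 (prod_le_prod (fun j _ => (ht j).1) fun j _ => le_side j), ?_⟩
  rw [← prod_subset (subset_univ u) fun j _ hj => by simp [htu j hj, hM],
    ← prod_subset (subset_univ u) fun j _ hj => htu j hj]
  calc ∏ j ∈ u, (⌈t j * M⌉₊ / M : ℝ) - ∏ j ∈ u, t j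
      ≤ ∑ j ∈ u, ((⌈t j * M⌉₊ / M : ℝ) - t j) :=
        prod_sub_prod_le_sum_sub u (fun j _ => (ht j).1) (fun j _ => le_side j)
          fun j _ => side_le_one j
    _ ≤ ∑ _j ∈ u, (1 / M : ℝ) := sum_le_sum fun j _ => side_sub_le j
    _ = u.card / M := by rw [sum_const, nsmul_eq_mul, mul_one_div]

theorem abs_localDisc_grid_le {M : ℕ} (hM : M ≠ 0) (y : Fin N → Fin s → Fin M)
    {u : Finset (Fin s)} {t : Fin s → ℝ} (ht : ∀ j, t j ∈ Set.Icc (0 : ℝ) 1)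
    (htu : ∀ j ∉ u, t j = 1) :
    |localDisc (fun n j => ((y n j : ℕ) / M : ℝ)) t| ≤
      |empiricalError y (boxIndicator fun j => ⌈t j * M⌉₊)| + u.card / M := by
  have rounding := prod_ceil_div_sub_prod_mem_Icc hM ht htu
  have mem_box_iff (n : Fin N) (j : Fin s) :
      ((y n j : ℕ) / M : ℝ) < t j ↔ (y n j : ℕ) < ⌈t j * M⌉₊ := by
    rw [div_lt_iff₀ (by positivity), Nat.lt_ceil]
  have sample_mean : 𝔼 n, boxIndicator (fun j => ⌈t j * M⌉₊) (y n) =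
      ((univ.filter fun n => ∀ j, ((y n j : ℕ) / M : ℝ) < t j).card : ℝ) / N := by
    simp only [Fintype.expect_eq_sum_div_card, boxIndicator, ← mem_box_iff, sum_boole,
      Fintype.card_fin]
  have localDisc_eq : localDisc (fun n j => ((y n j : ℕ) / M : ℝ)) t =
      empiricalError y (boxIndicator fun j => ⌈t j * M⌉₊) +
        (∏ j, (⌈t j * M⌉₊ / M : ℝ) - ∏ j, t j) := by
    rw [empiricalError, sample_mean, expect_boxIndicator (mem_gridCorners.1
      (ceil_mul_mem_gridCorners (fun j => (ht j).2) htu)).1, sub_add_sub_cancel, localDisc]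
  rw [localDisc_eq]
  refine (abs_add_le _ _).trans ?_
  gcongr
  rw [abs_of_nonneg rounding.1]
  exact rounding.2

theorem exists_chain_depth (hN : N ≠ 0) (hs : 2 ≤ s) :
    ∃ K : ℕ, 1 ≤ deviationScale N s s * 4 ^ (K + 1) ∧
      ∀ d ≤ s, deviationScale N s d ≤ 1 → ∀ i ≤ K, deviationScale N s d * 4 ^ i ≤ 1 := by
  set η := deviationScale N s s
  have η_pos : 0 < η := deviationScale_pos hN hs (by omega)
  rcases le_or_gt η 1 with η_le | η_gt
  · obtain ⟨K, pow_le, lt_pow⟩ :=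
      exists_nat_pow_near ((one_le_inv₀ η_pos).2 η_le) (by norm_num : (1 : ℝ) < 4)
    refine ⟨K, ((inv_lt_iff_one_lt_mul₀' η_pos).1 lt_pow).le, fun d hd _ i hi => ?_⟩
    calc deviationScale N s d * 4 ^ i ≤ η * 4 ^ K := by
          gcongr
          · exact deviationScale_mono N s hd
          · norm_num
      _ ≤ 1 := (le_inv_mul_iff₀ η_pos).1 (by rwa [mul_one])
  · refine ⟨0, by norm_num; linarith, fun d _ hd i hi => ?_⟩
    rwa [Nat.le_zero.1 hi, pow_zero, mul_one]

theorem mul_deviationScale_self_le {d : ℕ} (hd : d ≤ s) :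
    d * deviationScale N s s ≤ s * deviationScale N s d := by
  have sqrt_le : Real.sqrt d ≤ Real.sqrt s := Real.sqrt_le_sqrt (mod_cast hd)
  rw [deviationScale_eq_mul, deviationScale_eq_mul]
  set A := Real.sqrt 10 * (Real.sqrt (Real.log s) / Real.sqrt N)
  calc d * (A * Real.sqrt s)
      = Real.sqrt d * Real.sqrt d * (A * Real.sqrt s) := by
        rw [Real.mul_self_sqrt d.cast_nonneg]
    _ ≤ Real.sqrt s * Real.sqrt d * (A * Real.sqrt s) := by gcongr
    _ = Real.sqrt s * Real.sqrt s * (A * Real.sqrt d) := by ring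
    _ = s * (A * Real.sqrt d) := by rw [Real.mul_self_sqrt s.cast_nonneg]

theorem card_div_mesh_le {K d : ℕ} (hs : s ≠ 0) (hd : d ≤ s)
    (hK : 1 ≤ deviationScale N s s * 4 ^ (K + 1)) :
    (d : ℝ) / (s * 8 ^ K : ℕ) ≤ 4 * deviationScale N s d := by
  push_cast
  rw [div_le_iff₀ (by positivity)]
  have η_nonneg : 0 ≤ deviationScale N s d := deviationScale_nonneg
  calc (d : ℝ) ≤ d * (deviationScale N s s * 4 ^ (K + 1)) := le_mul_of_one_le_right d.cast_nonneg hK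
    _ = d * deviationScale N s s * 4 ^ (K + 1) := by ring
    _ ≤ s * deviationScale N s d * 4 ^ (K + 1) :=
        mul_le_mul_of_nonneg_right (mul_deviationScale_self_le hd) (by positivity)
    _ = 4 * deviationScale N s d * (s * 4 ^ K) := by ring
    _ ≤ 4 * deviationScale N s d * (s * 8 ^ K) := by
        gcongr
        norm_num

theorem projPoint_mem_Icc (u : Finset (Fin s)) {z : Fin s → ℝ}
    (hz : ∀ j, z j ∈ Set.Icc (0 : ℝ) 1) (j : Fin s) : projPoint u z j ∈ Set.Icc (0 : ℝ) 1 := by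
  unfold projPoint
  split_ifs
  exacts [hz j, Set.right_mem_Icc.2 zero_le_one]

theorem exists_points_forall_abs_localDisc_le (hN : N ≠ 0) (hs : 2 ≤ s) :
    ∃ x : Fin N → Fin s → ℝ, (∀ n j, x n j ∈ Set.Ico (0 : ℝ) 1) ∧
      ∀ u : Finset (Fin s), u.Nonempty → ∀ z : Fin s → ℝ, (∀ j, z j ∈ Set.Icc (0 : ℝ) 1) →
        |localDisc x (projPoint u z)| ≤ 22 * deviationScale N s u.card := by
  obtain ⟨K, mesh_fine, chain_short⟩ := exists_chain_depth hN hs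
  obtain ⟨y, hy⟩ := exists_forall_abs_empiricalError_boxIndicator_le hN hs K
  have mesh_ne_zero : s * 8 ^ K ≠ 0 := by positivity
  refine ⟨fun n j => (y n j : ℕ) / (s * 8 ^ K : ℕ), fun n j => ⟨by positivity, ?_⟩, ?_⟩
  · rw [div_lt_one (by positivity)]
    exact_mod_cast (y n j).2
  intro u hu z hz
  have ht := projPoint_mem_Icc u hz
  have htu : ∀ j ∉ u, projPoint u z j = 1 := fun j hj => if_neg hj
  have card_le : u.card ≤ s := card_finset_fin_le u
  rcases le_or_gt (deviationScale N s u.card) 1 with η_le | η_gt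
  · have sampling := hy u hu (chain_short _ card_le η_le) _
      (ceil_mul_mem_gridCorners (fun j => (ht j).2) htu)
    have rounding := card_div_mesh_le (by omega) card_le mesh_fine
    linarith [abs_localDisc_grid_le mesh_ne_zero y ht htu]
  · linarith [abs_localDisc_le_one (fun n j => ((y n j : ℕ) / (s * 8 ^ K : ℕ) : ℝ)) ht]

end LocalDiscrepancy

section WeightedDiscrepancy

variable {γ : ℕ → ℝ} {N s : ℕ}

theorem weightOf_nonneg (hγ : ∀ j, 1 ≤ j → 0 ≤ γ j) (u : Finset (Fin s)) : 0 ≤ weightOf γ u :=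
  prod_nonneg fun j _ => hγ _ (Nat.le_add_left 1 j)

theorem wStarDisc_nonneg (hγ : ∀ j, 1 ≤ j → 0 ≤ γ j) (x : Fin N → Fin s → ℝ) :
    0 ≤ wStarDisc γ x := by
  refine Real.sSup_nonneg ?_
  rintro _ ⟨z, -, u, -, rfl⟩
  exact mul_nonneg (weightOf_nonneg hγ u) (abs_nonneg _)

theorem wMinDisc_le_wStarDisc (hγ : ∀ j, 1 ≤ j → 0 ≤ γ j) {x : Fin N → Fin s → ℝ}
    (hx : ∀ n j, x n j ∈ Set.Ico (0 : ℝ) 1) : wMinDisc γ N s ≤ wStarDisc γ x := by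
  refine csInf_le ⟨0, ?_⟩ ⟨x, hx, rfl⟩
  rintro _ ⟨x', -, rfl⟩
  exact wStarDisc_nonneg hγ x'

theorem weightOf_mul_sqrt_card_le_sSup (γ : ℕ → ℝ) {u : Finset (Fin s)} (hu : u.Nonempty) :
    weightOf γ u * Real.sqrt u.card ≤ sSup {d : ℝ | ∃ u : Finset (Fin s), u.Nonempty ∧
      d = weightOf γ u * Real.sqrt u.card} := by
  refine le_csSup (Set.Finite.bddAbove ?_) ⟨u, hu, rfl⟩
  refine (Set.finite_range fun u : Finset (Fin s) => weightOf γ u * Real.sqrt u.card).subset ?_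
  rintro _ ⟨v, -, rfl⟩
  exact Set.mem_range_self v

end WeightedDiscrepancy

theorem wMinDisc_le_general {γ : ℕ → ℝ} (hγ : ∀ j, 1 ≤ j → 0 ≤ γ j) {N s : ℕ} (hN : 1 ≤ N)
    (hs : 2 ≤ s) :
    wMinDisc γ N s ≤ 22 * Real.sqrt 10 * (Real.sqrt (Real.log s) / Real.sqrt N) *
      sSup {d : ℝ | ∃ u : Finset (Fin s), u.Nonempty ∧
        d = weightOf γ u * Real.sqrt u.card} := by
  obtain ⟨x, hx, localDisc_le⟩ := exists_points_forall_abs_localDisc_le (by omega : N ≠ 0) hs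
  refine (wMinDisc_le_wStarDisc hγ hx).trans (Real.sSup_le ?_ ?_)
  · rintro _ ⟨z, hz, u, hu, rfl⟩
    calc weightOf γ u * |localDisc x (projPoint u z)|
        ≤ weightOf γ u * (22 * deviationScale N s u.card) :=
          mul_le_mul_of_nonneg_left (localDisc_le u hu z hz) (weightOf_nonneg hγ u)
      _ = 22 * Real.sqrt 10 * (Real.sqrt (Real.log s) / Real.sqrt N) *
            (weightOf γ u * Real.sqrt u.card) := by rw [deviationScale_eq_mul]; ring
      _ ≤ _ := by gcongr; exact weightOf_mul_sqrt_card_le_sSup γ hu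
  · refine mul_nonneg (by positivity) (Real.sSup_nonneg ?_)
    rintro _ ⟨u, -, rfl⟩
    exact mul_nonneg (weightOf_nonneg hγ u) (Real.sqrt_nonneg _)

/-- for any nonnegative weights `γ` there is `C > 0` (independent of `N`
and `s`) with `disc_γ(N,s) ≤ C (√(log s)/√N) max_{∅ ≠ u ⊆ [s]} γ_u √|u|`. -/
theorem wMinDisc_le (γ : ℕ → ℝ) (hγ : ∀ j, 1 ≤ j → 0 ≤ γ j) :
    ∃ C : ℝ, 0 < C ∧ ∀ N s : ℕ, 1 ≤ N → 2 ≤ s →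
      wMinDisc γ N s ≤ C * (Real.sqrt (Real.log s) / Real.sqrt N) *
        sSup {d : ℝ | ∃ u : Finset (Fin s), u.Nonempty ∧
          d = weightOf γ u * Real.sqrt u.card} :=
  ⟨22 * Real.sqrt 10, by positivity, fun _ _ => wMinDisc_le_general hγ⟩
end

section
/- Let γ = (γ_j)_{j≥1} be nonnegative weights with ∑_{j≥1} γ_j < ∞ and let δ > 0. Then there exists a constant C > 0 (depending only on γ and δ, not on p, m, or s) such that for every prime number p, every m ∈ ℕ, and every s ∈ ℕ there exists a p^m-element point set P in [0,1)^s with weighted star-discrepancy D*_γ(P) ≤ C·p^{−m(1−δ)}. -/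
open Finset

/-!
Let `q` be a prime with `N < q ≤ 2 N` and take the first `N` points of a rank-1 lattice `{n z / q}`
whose generating vector `z` is averaged over all of `(ZMod q)^s`. Rounding the corner of a box up
to the grid `q⁻¹ ℤ` costs `#u / q`, and the number of points in a grid box is expanded in additive
characters: the frequency `h = 0` gives the volume, and the others are incomplete geometric sums.
For `h ≠ 0` the residue `h ⬝ᵥ z` is equidistributed over `z`, so on average the weighted counting
error is at most `L ∏ (1 + γ_j L)` with `L = 2 + log q`. Summability of the weights makes this
product `O_δ(q ^ δ)` uniformly in `s`.
-/

open scoped BigOperators ZMod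

section RealAnalysis

theorem two_mul_mul_one_sub_le_sin_pi_mul {x : ℝ} (h₀ : 0 ≤ x) (h₁ : x ≤ 1) :
    2 * x * (1 - x) ≤ Real.sin (Real.pi * x) := by
  have hπ := Real.pi_pos
  wlog h : x ≤ 1 / 2 generalizing x
  · have := this (x := 1 - x) (by linarith) (by linarith) (by linarith)
    rw [show Real.pi * (1 - x) = Real.pi - Real.pi * x by ring, Real.sin_pi_sub] at this
    linarith
  have hsin := Real.mul_le_sin (x := Real.pi * x) (by positivity) (by nlinarith)
  rw [← mul_assoc, div_mul_cancel₀ _ hπ.ne'] at hsin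
  nlinarith

theorem norm_prod_sub_prod_le {ι R : Type*} [NormedCommRing R] [NormOneClass R] {S : Finset ι}
    {a b : ι → R} (ha : ∀ i ∈ S, ‖a i‖ ≤ 1) (hb : ∀ i ∈ S, ‖b i‖ ≤ 1) :
    ‖∏ i ∈ S, a i - ∏ i ∈ S, b i‖ ≤ ∑ i ∈ S, ‖a i - b i‖ := by
  classical
  induction S using Finset.induction with
  | empty => simp
  | insert i S hi ih =>
    rw [forall_mem_insert] at ha hb
    rw [prod_insert hi, prod_insert hi, sum_insert hi]
    have hprod : ‖∏ i ∈ S, a i‖ ≤ 1 :=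
      (S.norm_prod_le a).trans (prod_le_one (fun _ _ => norm_nonneg _) ha.2)
    calc ‖a i * ∏ i ∈ S, a i - b i * ∏ i ∈ S, b i‖
        = ‖(a i - b i) * ∏ i ∈ S, a i + b i * (∏ i ∈ S, a i - ∏ i ∈ S, b i)‖ := by ring_nf
      _ ≤ ‖a i - b i‖ * ‖∏ i ∈ S, a i‖ + ‖b i‖ * ‖∏ i ∈ S, a i - ∏ i ∈ S, b i‖ :=
        (norm_add_le _ _).trans (add_le_add (norm_mul_le _ _) (norm_mul_le _ _))
      _ ≤ ‖a i - b i‖ * 1 + 1 * ∑ i ∈ S, ‖a i - b i‖ := by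
        gcongr
        exacts [hb.1, ih ha.2 hb.2]
      _ = ‖a i - b i‖ + ∑ i ∈ S, ‖a i - b i‖ := by ring

theorem abs_prod_ceil_div_sub_prod_le {ι : Type*} {S : Finset ι} {t : ι → ℝ}
    (ht : ∀ j ∈ S, t j ∈ Set.Icc (0 : ℝ) 1) {q : ℕ} (hq : 0 < q) :
    |∏ j ∈ S, (⌈t j * q⌉₊ / q : ℝ) - ∏ j ∈ S, t j| ≤ #S / q := by
  have hq' : (0 : ℝ) < q := by exact_mod_cast hq
  have hround (j : ι) (hj : j ∈ S) : ‖(⌈t j * q⌉₊ / q : ℝ) - t j‖ ≤ 1 / q := by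
    have hlt := Nat.ceil_lt_add_one (mul_nonneg (ht j hj).1 hq'.le)
    rw [show (⌈t j * q⌉₊ / q : ℝ) - t j = (⌈t j * q⌉₊ - t j * q) / q by field_simp, norm_div,
      Real.norm_natCast, Real.norm_of_nonneg (sub_nonneg.2 (Nat.le_ceil _))]
    gcongr
    linarith
  refine (norm_prod_sub_prod_le (fun j hj => ?_) fun j hj => ?_).trans
    ((sum_le_sum hround).trans_eq ?_)
  · rw [Real.norm_of_nonneg (by positivity), div_le_one hq']
    exact_mod_cast Nat.ceil_le.2 (mul_le_of_le_one_left hq'.le (ht j hj).2)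
  · rw [Real.norm_of_nonneg (ht j hj).1]
    exact (ht j hj).2
  · rw [sum_const, nsmul_eq_mul, mul_one_div]

theorem prod_mul_card_le {ι : Type*} {S u : Finset ι} (hu : u ⊆ S) {w : ι → ℝ}
    (hw : ∀ j ∈ S, 0 ≤ w j) : (∏ j ∈ u, w j) * #u ≤ ∏ j ∈ S, (1 + w j * 2) := by
  classical
  have hcard : (#u : ℝ) ≤ 2 ^ #u := by exact_mod_cast Nat.lt_two_pow_self.le
  calc (∏ j ∈ u, w j) * #u ≤ (∏ j ∈ u, w j) * 2 ^ #u :=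
        mul_le_mul_of_nonneg_left hcard (prod_nonneg fun j hj => hw j (hu hj))
    _ = ∏ j ∈ u, w j * 2 := by rw [prod_mul_distrib, prod_const]
    _ ≤ ∑ v ∈ S.powerset, ∏ j ∈ v, w j * 2 :=
        single_le_sum (f := fun v => ∏ j ∈ v, w j * 2) (fun v hv => prod_nonneg fun j hj =>
          mul_nonneg (hw j (mem_powerset.1 hv hj)) zero_le_two) (mem_powerset.2 hu)
    _ = ∏ j ∈ S, (1 + w j * 2) := (prod_one_add S).symm

variable {κ : Type*} {g : κ → ℝ}

theorem tendsto_tsum_div_one_add_mul (hg : ∀ j, 0 ≤ g j) (hsum : Summable g) :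
    Filter.Tendsto (fun K : ℝ => ∑' j, g j / (1 + K * g j)) Filter.atTop (nhds 0) := by
  rw [← tsum_zero (α := ℝ) (β := κ)]
  refine tendsto_tsum_of_dominated_convergence hsum (fun j => ?_) ?_
  · rcases (hg j).eq_or_lt with h0 | hpos
    · simp [← h0]
    · exact tendsto_const_nhds.div_atTop <| Filter.tendsto_atTop_add_const_left _ _ <|
        Filter.tendsto_id.atTop_mul_const hpos
  · filter_upwards [Filter.eventually_ge_atTop 0] with K hK j
    have hden : 1 ≤ 1 + K * g j := le_add_of_nonneg_right (mul_nonneg hK (hg j))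
    rw [Real.norm_of_nonneg (div_nonneg (hg j) (zero_le_one.trans hden))]
    exact div_le_self (hg j) hden

/- Splitting `1 + g j * L ≤ (1 + K * g j) * (1 + b j * L)` with `b j = g j / (1 + K * g j)` leaves a
product bounded independently of `L` and a sum `∑ b j` that is small for large `K`. -/
theorem exists_prod_one_add_mul_le_exp (hg : ∀ j, 0 ≤ g j) (hsum : Summable g) {δ : ℝ}
    (hδ : 0 < δ) :
    ∃ C : ℝ, 0 < C ∧ ∀ (S : Finset κ) (L : ℝ), 0 ≤ L →
      ∏ j ∈ S, (1 + g j * L) ≤ C * Real.exp (δ * L) := by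
  obtain ⟨K, hKδ, hK⟩ := (((tendsto_tsum_div_one_add_mul hg hsum).eventually_lt_const hδ).and
    (Filter.eventually_ge_atTop 0)).exists
  have hden : ∀ j, 1 ≤ 1 + K * g j := fun j => le_add_of_nonneg_right (mul_nonneg hK (hg j))
  set b : κ → ℝ := fun j => g j / (1 + K * g j)
  have hb : ∀ j, 0 ≤ b j := fun j => div_nonneg (hg j) (zero_le_one.trans (hden j))
  have hbsum : Summable b := hsum.of_nonneg_of_le hb fun j => div_le_self (hg j) (hden j)
  refine ⟨Real.exp (∑' j, K * g j), Real.exp_pos _, fun S L hL => ?_⟩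
  have hfactor (j : κ) : 1 + g j * L ≤ (1 + K * g j) * (1 + b j * L) := by
    have : (1 + K * g j) * (b j * L) = g j * L := by
      rw [← mul_assoc, mul_div_cancel₀ _ (zero_lt_one.trans_le (hden j)).ne']
    linarith [mul_nonneg hK (hg j)]
  calc ∏ j ∈ S, (1 + g j * L)
      ≤ (∏ j ∈ S, (1 + K * g j)) * ∏ j ∈ S, (1 + b j * L) := by
        rw [← prod_mul_distrib]
        exact prod_le_prod (fun j _ => by have := hg j; positivity) fun j _ => hfactor j
    _ ≤ Real.exp (∑ j ∈ S, K * g j) * Real.exp (∑ j ∈ S, b j * L) :=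
        mul_le_mul (Real.prod_one_add_le_exp_sum S fun j => mul_nonneg hK (hg j))
          (Real.prod_one_add_le_exp_sum S fun j => mul_nonneg (hb j) hL)
          (prod_nonneg fun j _ => by have := hb j; positivity) (Real.exp_pos _).le
    _ ≤ Real.exp (∑' j, K * g j) * Real.exp (δ * L) := by
        rw [← sum_mul]
        gcongr
        · exact (hsum.mul_left K).sum_le_tsum S fun j _ => mul_nonneg hK (hg j)
        · exact (hbsum.sum_le_tsum S fun j _ => hb j).trans hKδ.le

theorem exists_add_one_mul_prod_le_exp (hg : ∀ j, 0 ≤ g j) (hsum : Summable g) {δ : ℝ}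
    (hδ : 0 < δ) :
    ∃ C : ℝ, 0 < C ∧ ∀ (S : Finset κ) (L : ℝ), 0 ≤ L →
      (L + 1) * ∏ j ∈ S, (1 + g j * L) ≤ C * Real.exp (δ * L) := by
  obtain ⟨C, hC, hprod⟩ := exists_prod_one_add_mul_le_exp hg hsum (half_pos hδ)
  refine ⟨(1 + 2 / δ) * C, by positivity, fun S L hL => ?_⟩
  have hlinear : L + 1 ≤ (1 + 2 / δ) * Real.exp (δ / 2 * L) :=
    calc L + 1 ≤ (1 + 2 / δ) * (δ / 2 * L + 1) := by
          have : (1 + 2 / δ) * (δ / 2 * L + 1) = L + 1 + (δ / 2 * L + 2 / δ) := by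
            field_simp
            ring
          rw [this]
          exact le_add_of_nonneg_right (by positivity)
      _ ≤ (1 + 2 / δ) * Real.exp (δ / 2 * L) := by
          gcongr
          exact Real.add_one_le_exp _
  calc (L + 1) * ∏ j ∈ S, (1 + g j * L)
      ≤ (1 + 2 / δ) * Real.exp (δ / 2 * L) * (C * Real.exp (δ / 2 * L)) :=
        mul_le_mul hlinear (hprod S L hL)
          (prod_nonneg fun j _ => by have := hg j; positivity) (by positivity)
    _ = (1 + 2 / δ) * C * Real.exp (δ * L) := by
        rw [mul_mul_mul_comm, ← Real.exp_add]
        ring_nf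

end RealAnalysis

theorem expect_comp_surjective {A B : Type*} [AddGroup A] [AddGroup B] [Fintype A] [Fintype B]
    {M : Type*} [AddCommMonoid M] [Module ℚ≥0 M] (f : A →+ B) (hf : Function.Surjective f)
    (G : B → M) : 𝔼 a, G (f a) = 𝔼 b, G b := by
  have hshift (b : B) : 𝔼 a, G (f a + b) = 𝔼 a, G (f a) := by
    obtain ⟨a₀, rfl⟩ := hf b
    exact Fintype.expect_equiv (Equiv.addRight a₀) _ _ fun a => by simp
  calc 𝔼 a, G (f a) = 𝔼 b, 𝔼 a, G (f a + b) := by simp_rw [hshift, Fintype.expect_const]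
    _ = 𝔼 a, 𝔼 b, G (f a + b) := expect_comm _ _ _
    _ = 𝔼 _a : A, 𝔼 b, G b := by
        refine expect_congr rfl fun a _ => ?_
        exact Fintype.expect_equiv (Equiv.addLeft (f a)) _ _ fun b => rfl
    _ = 𝔼 b, G b := Fintype.expect_const _

theorem expect_comp_dotProduct {F ι : Type*} [Field F] [Fintype F] [Fintype ι] [DecidableEq ι]
    {M : Type*} [AddCommMonoid M] [Module ℚ≥0 M] {h : ι → F} (hh : h ≠ 0) (G : F → M) :
    𝔼 z : ι → F, G (h ⬝ᵥ z) = 𝔼 b, G b := by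
  obtain ⟨i, hi⟩ := Function.ne_iff.1 hh
  refine expect_comp_surjective (dotProductBilin F F h).toAddMonoidHom (fun c => ?_) G
  exact ⟨Pi.single i (c / h i), by simp [mul_div_cancel₀ _ hi]⟩

section ExponentialSums

variable {q : ℕ}

/-- The majorant `q⁻¹ |∑_{n < a} e(n b / q)| ≤ expSumMajorant b` (`a ≤ q`) of the normalised
incomplete exponential sums modulo `q`. It is `1` at `b = 0`, where both inverses are `0⁻¹ = 0`,
and `(1 / k + 1 / (q - k)) / 2` at the residue class of `0 < k < q`. -/
noncomputable def expSumMajorant (b : ZMod q) : ℝ :=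
  (if b = 0 then 1 else 0) + ((b.val : ℝ)⁻¹ + ((-b).val : ℝ)⁻¹) / 2

theorem expSumMajorant_zero : expSumMajorant (0 : ZMod q) = 1 := by simp [expSumMajorant]

theorem expSumMajorant_neg (b : ZMod q) : expSumMajorant (-b) = expSumMajorant b := by
  simp [expSumMajorant, add_comm]

theorem expSumMajorant_nonneg (b : ZMod q) : 0 ≤ expSumMajorant b := by
  unfold expSumMajorant
  positivity

variable [NeZero q]

theorem sum_zmod_val {M : Type*} [AddCommMonoid M] (f : ℕ → M) :
    ∑ b : ZMod q, f b.val = ∑ n ∈ range q, f n := by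
  obtain ⟨k, rfl⟩ := Nat.exists_eq_succ_of_ne_zero (NeZero.ne q)
  exact Fin.sum_univ_eq_sum_range f (k + 1)

theorem sum_expSumMajorant_le : ∑ b : ZMod q, expSumMajorant b ≤ 2 + Real.log q := by
  obtain ⟨k, rfl⟩ := Nat.exists_eq_succ_of_ne_zero (NeZero.ne q)
  have hharmonic : ∑ b : ZMod (k + 1), (b.val : ℝ)⁻¹ = harmonic k := by
    rw [sum_zmod_val fun n => (n : ℝ)⁻¹, sum_range_succ']
    simp [harmonic]
  have hneg : ∑ b : ZMod (k + 1), ((-b).val : ℝ)⁻¹ = harmonic k :=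
    (Equiv.sum_comp (Equiv.neg _) fun b : ZMod (k + 1) => (b.val : ℝ)⁻¹).trans hharmonic
  have hlog : Real.log k ≤ Real.log (k + 1 : ℕ) := by
    rcases k.eq_zero_or_pos with rfl | hk
    · simp
    · gcongr
      simp
  simp only [expSumMajorant, sum_add_distrib, ← sum_div, sum_ite_eq', mem_univ, if_true,
    Nat.succ_eq_add_one, hharmonic, hneg]
  linarith [harmonic_le_one_add_log k]

theorem le_norm_stdAddChar_sub_one (b : ZMod q) :
    4 * ((b.val : ℝ) / q) * (1 - (b.val : ℝ) / q) ≤ ‖ZMod.stdAddChar b - 1‖ := by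
  have hq : (0 : ℝ) < q := by exact_mod_cast NeZero.pos q
  have hexp : ZMod.stdAddChar b =
      Complex.exp (Complex.I * ((2 * (Real.pi * ((b.val : ℝ) / q)) : ℝ) : ℂ)) := by
    rw [ZMod.stdAddChar_apply, ZMod.toCircle_apply]
    push_cast
    ring_nf
  have hsin := two_mul_mul_one_sub_le_sin_pi_mul (x := (b.val : ℝ) / q) (by positivity)
    ((div_le_one hq).2 (by exact_mod_cast (ZMod.val_lt b).le))
  rw [hexp, Complex.norm_exp_I_mul_ofReal_sub_one, mul_div_cancel_left₀ _ two_ne_zero]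
  exact le_trans (by linarith) (le_abs_self _)

theorem norm_sum_range_stdAddChar_le {a : ℕ} (ha : a ≤ q) (b : ZMod q) :
    ‖∑ n ∈ range a, ZMod.stdAddChar ((n : ZMod q) * b)‖ ≤ q * expSumMajorant b := by
  rcases eq_or_ne b 0 with rfl | hb
  · simpa [expSumMajorant_zero] using ha
  have hval : 0 < (b.val : ℝ) := by exact_mod_cast ZMod.val_pos.2 hb
  have hlt : (b.val : ℝ) < q := by exact_mod_cast ZMod.val_lt b
  have hq : (0 : ℝ) < q := hval.trans hlt
  have hmajorant : q * expSumMajorant b = 2 / (4 * ((b.val : ℝ) / q) * (1 - (b.val : ℝ) / q)) := by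
    have : (q : ℝ) - b.val ≠ 0 := (sub_pos.2 hlt).ne'
    rw [expSumMajorant, if_neg hb, ZMod.neg_val, if_neg hb, Nat.cast_sub (ZMod.val_lt b).le]
    field_simp
    ring
  have hgeom : ‖∑ n ∈ range a, ZMod.stdAddChar ((n : ZMod q) * b)‖ * ‖ZMod.stdAddChar b - 1‖
      ≤ 2 := by
    simp_rw [← nsmul_eq_mul, AddChar.map_nsmul_eq_pow]
    rw [← norm_mul, geom_sum_mul]
    refine (norm_sub_le _ _).trans ?_
    rw [norm_pow, AddChar.norm_apply, one_pow, norm_one, one_add_one_eq_two]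
  rw [hmajorant, le_div_iff₀ (mul_pos (by positivity) (sub_pos.2 ((div_lt_one hq).2 hlt)))]
  exact (mul_le_mul_of_nonneg_left (le_norm_stdAddChar_sub_one b) (norm_nonneg _)).trans hgeom

/-- The indicator function of the residue classes of `0, …, a - 1` modulo `q`. -/
def initialIndicator (q a : ℕ) : ZMod q → ℂ := fun r => if r.val < a then 1 else 0

theorem dft_initialIndicator {a : ℕ} (ha : a ≤ q) (h : ZMod q) :
    𝓕 (initialIndicator q a) h = ∑ n ∈ range a, ZMod.stdAddChar ((n : ZMod q) * -h) := by
  have hval (j : ZMod q) : ZMod.stdAddChar (-(j * h)) • initialIndicator q a j =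
      if j.val < a then ZMod.stdAddChar ((j.val : ZMod q) * -h) else 0 := by
    simp [initialIndicator]
  simp_rw [ZMod.dft_apply, hval]
  rw [sum_zmod_val fun n => if n < a then ZMod.stdAddChar ((n : ZMod q) * -h) else 0,
    ← sum_filter]
  congr 1
  ext n
  simp only [mem_filter, mem_range]
  omega

theorem dft_initialIndicator_zero {a : ℕ} (ha : a ≤ q) : 𝓕 (initialIndicator q a) 0 = a := by
  simp [dft_initialIndicator ha]

theorem norm_dft_initialIndicator_le {a : ℕ} (ha : a ≤ q) (h : ZMod q) :
    ‖𝓕 (initialIndicator q a) h‖ ≤ q * expSumMajorant h := by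
  rw [dft_initialIndicator ha, ← expSumMajorant_neg]
  exact norm_sum_range_stdAddChar_le ha (-h)

theorem dft_initialIndicator_self {h : ZMod q} (hh : h ≠ 0) :
    𝓕 (initialIndicator q q) h = 0 := by
  have hsum := AddChar.sum_mulShift (-h) (ZMod.isPrimitive_stdAddChar q)
  rw [if_neg (neg_ne_zero.2 hh), Nat.cast_zero] at hsum
  simpa [ZMod.dft_apply, initialIndicator, ZMod.val_lt] using hsum

theorem norm_inv_mul_dft_initialIndicator_le {a : ℕ} (ha : a ≤ q) (h : ZMod q) :
    ‖(q : ℂ)⁻¹ * 𝓕 (initialIndicator q a) h‖ ≤ expSumMajorant h := by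
  rw [norm_mul, norm_inv, Complex.norm_natCast, inv_mul_le_iff₀ (by exact_mod_cast NeZero.pos q)]
  exact norm_dft_initialIndicator_le ha h

theorem norm_inv_mul_dft_initialIndicator_self (h : ZMod q) :
    ‖(q : ℂ)⁻¹ * 𝓕 (initialIndicator q q) h‖ = if h = 0 then 1 else 0 := by
  split_ifs with hh
  · simp [hh, dft_initialIndicator_zero le_rfl, NeZero.ne q]
  · simp [dft_initialIndicator_self hh]

end ExponentialSums

section RankOneLattices

variable {q N : ℕ} {ι : Type*}

theorem sum_prod_initialIndicator [Fintype ι] (a : ι → ℕ) (z : ι → ZMod q) :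
    ∑ n ∈ range N, ∏ j, initialIndicator q (a j) (n * z j) =
      #{n : Fin N | ∀ j, (((n : ℕ) : ZMod q) * z j).val < a j} := by
  rw [← Fin.sum_univ_eq_sum_range fun n : ℕ => ∏ j, initialIndicator q (a j) (n * z j)]
  simp [initialIndicator, prod_ite_zero]

/-- Bound for the `h`-th normalised Fourier coefficient of one side of a weighted grid box: the
term `1` at `h = 0` is the coefficient of an unrestricted coordinate, `w * expSumMajorant h` bounds
that of a restricted coordinate of weight `w`. -/
noncomputable def frequencyWeight (w : ℝ) (h : ZMod q) : ℝ :=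
  (if h = 0 then 1 else 0) + w * expSumMajorant h

theorem frequencyWeight_nonneg {w : ℝ} (hw : 0 ≤ w) (h : ZMod q) : 0 ≤ frequencyWeight w h := by
  have := expSumMajorant_nonneg h
  unfold frequencyWeight
  positivity

variable [NeZero q]

theorem sum_frequencyWeight (w : ℝ) :
    ∑ h : ZMod q, frequencyWeight w h = 1 + w * ∑ b : ZMod q, expSumMajorant b := by
  simp [frequencyWeight, sum_add_distrib, mul_sum]

theorem addChar_sum_eq_prod {A M κ : Type*} [AddCommMonoid A] [CommMonoid M] (ψ : AddChar A M)
    (S : Finset κ) (f : κ → A) : ψ (∑ j ∈ S, f j) = ∏ j ∈ S, ψ (f j) := by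
  simpa [← ofAdd_sum] using map_prod ψ.toMonoidHom (fun j => Multiplicative.ofAdd (f j)) S

/-- The first `N` points of the rank-1 lattice `{n z / q}` with generating vector `z`. -/
noncomputable def latticePoint (N : ℕ) (z : ι → ZMod q) : Fin N → ι → ℝ :=
  fun n j => (((n : ℕ) : ZMod q) * z j).val / q

theorem latticePoint_mem_Ico (z : ι → ZMod q) (n : Fin N) (j : ι) :
    latticePoint N z n j ∈ Set.Ico (0 : ℝ) 1 := by
  refine ⟨by unfold latticePoint; positivity, ?_⟩
  rw [latticePoint, div_lt_one (by exact_mod_cast NeZero.pos q)]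
  exact_mod_cast ZMod.val_lt _

theorem latticePoint_lt_iff (z : ι → ZMod q) (n : Fin N) (j : ι) (t : ℝ) :
    latticePoint N z n j < t ↔ (((n : ℕ) : ZMod q) * z j).val < ⌈t * q⌉₊ := by
  rw [latticePoint, div_lt_iff₀ (by exact_mod_cast NeZero.pos q), Nat.lt_ceil]

variable [Fintype ι]

theorem prod_mul_prod_norm_dft_le {w : ι → ℝ} (hw : ∀ j, 0 ≤ w j) {u : Finset ι} {a : ι → ℕ}
    (ha : ∀ j, a j ≤ q) (hau : ∀ j ∉ u, a j = q) (h : ι → ZMod q) :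
    (∏ j ∈ u, w j) * ∏ j, ‖(q : ℂ)⁻¹ * 𝓕 (initialIndicator q (a j)) (h j)‖ ≤
      ∏ j, frequencyWeight (w j) (h j) := by
  classical
  rw [← prod_ite_mem_eq u, ← prod_mul_distrib]
  refine prod_le_prod (fun j _ => ?_) fun j _ => ?_
  · have := hw j
    split_ifs <;> positivity
  · unfold frequencyWeight
    have hr := mul_nonneg (hw j) (expSumMajorant_nonneg (h j))
    by_cases hj : j ∈ u
    · rw [if_pos hj]
      exact (mul_le_mul_of_nonneg_left (norm_inv_mul_dft_initialIndicator_le (ha j) _)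
        (hw j)).trans (le_add_of_nonneg_left (by positivity))
    · rw [if_neg hj, one_mul, hau j hj, norm_inv_mul_dft_initialIndicator_self]
      exact le_add_of_nonneg_right hr

variable [DecidableEq ι]

theorem prod_eq_sum_dft (Φ : ι → ZMod q → ℂ) (x : ι → ZMod q) :
    ∏ j, Φ j (x j) =
      ∑ h : ι → ZMod q, (∏ j, (q : ℂ)⁻¹ * 𝓕 (Φ j) (h j)) * ZMod.stdAddChar (h ⬝ᵥ x) := by
  have hinv (j : ι) : Φ j (x j) =
      ∑ h : ZMod q, (q : ℂ)⁻¹ * 𝓕 (Φ j) h * ZMod.stdAddChar (h * x j) := by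
    conv_lhs => rw [← ZMod.dft.symm_apply_apply (Φ j), ZMod.invDFT_apply, smul_eq_mul, mul_sum]
    exact sum_congr rfl fun h _ => by rw [smul_eq_mul]; ring
  simp_rw [hinv, Fintype.prod_sum, prod_mul_distrib, dotProduct, addChar_sum_eq_prod]

theorem norm_sum_prod_sub_le (hN : N ≤ q) (Φ : ι → ZMod q → ℂ) (z : ι → ZMod q) :
    ‖∑ n ∈ range N, ∏ j, Φ j (n * z j) - N * ∏ j, (q : ℂ)⁻¹ * 𝓕 (Φ j) 0‖ ≤
      q * ∑ h ∈ univ.erase (0 : ι → ZMod q),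
        (∏ j, ‖(q : ℂ)⁻¹ * 𝓕 (Φ j) (h j)‖) * expSumMajorant (h ⬝ᵥ z) := by
  have hfourier : ∑ n ∈ range N, ∏ j, Φ j (n * z j) =
      ∑ h : ι → ZMod q, (∏ j, (q : ℂ)⁻¹ * 𝓕 (Φ j) (h j)) *
        ∑ n ∈ range N, ZMod.stdAddChar ((n : ZMod q) * (h ⬝ᵥ z)) := by
    simp_rw [mul_sum]
    rw [sum_comm]
    refine sum_congr rfl fun n _ => ?_
    rw [prod_eq_sum_dft Φ fun j => n * z j]
    refine sum_congr rfl fun h _ => ?_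
    rw [← smul_eq_mul (n : ZMod q), ← dotProduct_smul]
    rfl
  have hzero : (∏ j, (q : ℂ)⁻¹ * 𝓕 (Φ j) ((0 : ι → ZMod q) j)) *
      ∑ n ∈ range N, ZMod.stdAddChar ((n : ZMod q) * ((0 : ι → ZMod q) ⬝ᵥ z)) =
        N * ∏ j, (q : ℂ)⁻¹ * 𝓕 (Φ j) 0 := by
    simp [mul_comm]
  rw [hfourier, ← add_sum_erase univ _ (mem_univ (0 : ι → ZMod q)), hzero, add_sub_cancel_left,
    mul_sum]
  refine (norm_sum_le _ _).trans (sum_le_sum fun h _ => ?_)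
  rw [norm_mul, norm_prod, mul_left_comm]
  gcongr
  exact norm_sum_range_stdAddChar_le hN _

/-- The figure of merit of the generating vector `z`: for the weights `w` it bounds the weighted
star-discrepancy of the first `N ≤ q` points of the lattice, up to the factor `q / N` and the
error of rounding the corner of the box to the grid `q⁻¹ ℤ`. -/
noncomputable def latticeMerit (w : ι → ℝ) (z : ι → ZMod q) : ℝ :=
  ∑ h ∈ univ.erase (0 : ι → ZMod q),
    (∏ j, frequencyWeight (w j) (h j)) * expSumMajorant (h ⬝ᵥ z)

theorem expect_latticeMerit_le {q : ℕ} [Fact q.Prime] {w : ι → ℝ} (hw : ∀ j, 0 ≤ w j) :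
    𝔼 z : ι → ZMod q, latticeMerit w z ≤
      (∏ j, (1 + w j * ∑ b : ZMod q, expSumMajorant b)) * 𝔼 b : ZMod q, expSumMajorant b := by
  have hweight (h : ι → ZMod q) : 0 ≤ ∏ j, frequencyWeight (w j) (h j) :=
    prod_nonneg fun j _ => frequencyWeight_nonneg (hw j) _
  calc 𝔼 z : ι → ZMod q, latticeMerit w z
      = ∑ h ∈ univ.erase (0 : ι → ZMod q), (∏ j, frequencyWeight (w j) (h j)) *
          𝔼 b : ZMod q, expSumMajorant b := by
        simp_rw [latticeMerit, expect_sum_comm, ← mul_expect]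
        refine sum_congr rfl fun h hh => ?_
        rw [expect_comp_dotProduct (ne_of_mem_erase hh)]
    _ ≤ ∑ h : ι → ZMod q, (∏ j, frequencyWeight (w j) (h j)) *
          𝔼 b : ZMod q, expSumMajorant b :=
        sum_le_sum_of_subset_of_nonneg (erase_subset _ _) fun h _ _ =>
          mul_nonneg (hweight h) (expect_nonneg fun b _ => expSumMajorant_nonneg b)
    _ = _ := by simp_rw [← sum_mul, ← Fintype.prod_sum, sum_frequencyWeight]

theorem exists_latticeMerit_le {q : ℕ} [Fact q.Prime] {w : ι → ℝ} (hw : ∀ j, 0 ≤ w j) :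
    ∃ z : ι → ZMod q,
      q * latticeMerit w z ≤ (2 + Real.log q) * ∏ j, (1 + w j * (2 + Real.log q)) := by
  obtain ⟨z, -, hz⟩ := exists_le_of_expect_le univ_nonempty (expect_latticeMerit_le (q := q) hw)
  have hq : (0 : ℝ) < q := by exact_mod_cast NeZero.pos q
  have hΛ : 0 ≤ ∑ b : ZMod q, expSumMajorant b := sum_nonneg fun b _ => expSumMajorant_nonneg b
  have hL : 0 ≤ 2 + Real.log q := hΛ.trans sum_expSumMajorant_le
  refine ⟨z, ?_⟩
  rw [Fintype.expect_eq_sum_div_card, ZMod.card, mul_div_assoc', le_div_iff₀' hq] at hz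
  refine hz.trans ?_
  rw [mul_comm]
  gcongr with j
  · exact prod_nonneg fun j _ => by have := hw j; positivity
  · exact sum_expSumMajorant_le
  · exact fun j _ => by have := hw j; positivity
  · exact hw j
  · exact sum_expSumMajorant_le

theorem prod_mul_abs_card_sub_le (hN : N ≤ q) {w : ι → ℝ} (hw : ∀ j, 0 ≤ w j) {u : Finset ι}
    {a : ι → ℕ} (ha : ∀ j, a j ≤ q) (hau : ∀ j ∉ u, a j = q) (z : ι → ZMod q) :
    (∏ j ∈ u, w j) * |(#{n : Fin N | ∀ j, (((n : ℕ) : ZMod q) * z j).val < a j} : ℝ) -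
      N * ∏ j, (a j / q : ℝ)| ≤ q * latticeMerit w z := by
  have hw_u : 0 ≤ ∏ j ∈ u, w j := prod_nonneg fun j _ => hw j
  have hnorm := norm_sum_prod_sub_le hN (fun j => initialIndicator q (a j)) z
  simp_rw [sum_prod_initialIndicator, dft_initialIndicator_zero (ha _), inv_mul_eq_div] at hnorm
  refine (mul_le_mul_of_nonneg_left (le_of_eq_of_le ?_ hnorm) hw_u).trans ?_
  · rw [← Real.norm_eq_abs, ← Complex.norm_real]
    push_cast
    rfl
  · rw [mul_left_comm, latticeMerit, mul_sum]
    refine mul_le_mul_of_nonneg_left (sum_le_sum fun h _ => ?_) q.cast_nonneg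
    rw [← mul_assoc]
    refine mul_le_mul_of_nonneg_right ?_ (expSumMajorant_nonneg _)
    simpa only [inv_mul_eq_div] using prod_mul_prod_norm_dft_le hw ha hau h

end RankOneLattices

section WeightedStarDiscrepancy

variable {q N s : ℕ} [NeZero q]

theorem prod_mul_abs_localDisc_latticePoint_le (hN : 0 < N) (hNq : N ≤ q) {w : Fin s → ℝ}
    (hw : ∀ j, 0 ≤ w j) {u : Finset (Fin s)} {t : Fin s → ℝ}
    (ht : ∀ j, t j ∈ Set.Icc (0 : ℝ) 1) (htu : ∀ j ∉ u, t j = 1) (z : Fin s → ZMod q) :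
    (∏ j ∈ u, w j) * |localDisc (latticePoint N z) t| ≤
      (q * latticeMerit w z + ∏ j, (1 + w j * 2)) / N := by
  have hN' : (0 : ℝ) < N := by exact_mod_cast hN
  have hq : (0 : ℝ) < q := by exact_mod_cast NeZero.pos q
  have hw_u : 0 ≤ ∏ j ∈ u, w j := prod_nonneg fun j _ => hw j
  have hgrid_le (j : Fin s) : ⌈t j * q⌉₊ ≤ q :=
    Nat.ceil_le.2 (mul_le_of_le_one_left hq.le (ht j).2)
  have hgrid_eq (j : Fin s) (hj : j ∉ u) : ⌈t j * q⌉₊ = q := by simp [htu j hj]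
  set count := (#{n : Fin N | ∀ j, (((n : ℕ) : ZMod q) * z j).val < ⌈t j * q⌉₊} : ℝ)
  have hcount : (∏ j ∈ u, w j) * |count - N * ∏ j, (⌈t j * q⌉₊ / q : ℝ)| ≤
      q * latticeMerit w z := by
    convert prod_mul_abs_card_sub_le hNq hw hgrid_le hgrid_eq z
  have hround : |∏ j, (⌈t j * q⌉₊ / q : ℝ) - ∏ j, t j| ≤ #u / N := by
    rw [← prod_subset u.subset_univ fun j _ hj => htu j hj,
      ← prod_subset u.subset_univ fun j _ hj => by rw [hgrid_eq j hj, div_self hq.ne']]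
    refine (abs_prod_ceil_div_sub_prod_le (fun j _ => ht j) (NeZero.pos q)).trans ?_
    gcongr
  have hsplit : localDisc (latticePoint N z) t =
      (count - N * ∏ j, (⌈t j * q⌉₊ / q : ℝ)) / N +
        (∏ j, (⌈t j * q⌉₊ / q : ℝ) - ∏ j, t j) := by
    simp_rw [localDisc, latticePoint_lt_iff]
    field_simp
    ring
  calc (∏ j ∈ u, w j) * |localDisc (latticePoint N z) t|
      ≤ (∏ j ∈ u, w j) * (|count - N * ∏ j, (⌈t j * q⌉₊ / q : ℝ)| / N + #u / N) := by
        rw [hsplit]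
        gcongr
        refine (abs_add_le _ _).trans (add_le_add (le_of_eq ?_) hround)
        rw [abs_div, abs_of_pos hN']
    _ = ((∏ j ∈ u, w j) * |count - N * ∏ j, (⌈t j * q⌉₊ / q : ℝ)| +
          (∏ j ∈ u, w j) * #u) / N := by ring
    _ ≤ (q * latticeMerit w z + ∏ j, (1 + w j * 2)) / N := by
        have hcard := prod_mul_card_le u.subset_univ fun j _ => hw j
        exact div_le_div_of_nonneg_right (add_le_add hcount hcard) hN'.le

theorem wStarDisc_latticePoint_le (hN : 0 < N) (hNq : N ≤ q) (γ : ℕ → ℝ) (z : Fin s → ZMod q) :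
    wStarDisc γ (latticePoint N z) ≤
      (q * latticeMerit (fun j : Fin s => |γ (j + 1)|) z +
        ∏ j : Fin s, (1 + |γ (j + 1)| * 2)) / N := by
  have hbound {u : Finset (Fin s)} {t : Fin s → ℝ} (ht : ∀ j, t j ∈ Set.Icc (0 : ℝ) 1)
      (htu : ∀ j ∉ u, t j = 1) :=
    prod_mul_abs_localDisc_latticePoint_le hN hNq (fun j : Fin s => abs_nonneg (γ (j + 1)))
      ht htu z
  refine Real.sSup_le ?_ ?_
  · rintro d ⟨y, hy, u, -, rfl⟩
    refine (mul_le_mul_of_nonneg_right (le_abs_self _) (abs_nonneg _)).trans ?_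
    rw [weightOf, abs_prod]
    refine hbound (fun j => ?_) fun j hj => if_neg hj
    unfold projPoint
    split_ifs
    exacts [hy j, ⟨zero_le_one, le_rfl⟩]
  · exact (mul_nonneg (prod_nonneg fun _ _ => abs_nonneg _) (abs_nonneg _)).trans
      (hbound (u := ∅) (t := 1) (fun _ => ⟨zero_le_one, le_rfl⟩) fun _ _ => rfl)

theorem exists_wStarDisc_latticePoint_le {q : ℕ} [Fact q.Prime] (hN : 0 < N) (hNq : N ≤ q)
    (γ : ℕ → ℝ) :
    ∃ z : Fin s → ZMod q, wStarDisc γ (latticePoint N z) ≤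
      (2 + Real.log q + 1) * (∏ j ∈ range s, (1 + |γ (j + 1)| * (2 + Real.log q))) / N := by
  obtain ⟨z, hz⟩ := exists_latticeMerit_le (q := q) fun j : Fin s => abs_nonneg (γ (j + 1))
  refine ⟨z, (wStarDisc_latticePoint_le hN hNq γ z).trans ?_⟩
  rw [← Fin.prod_univ_eq_prod_range fun j => 1 + |γ (j + 1)| * (2 + Real.log q), add_one_mul]
  gcongr
  exact le_add_of_nonneg_right (Real.log_natCast_nonneg q)

theorem exists_point_set_wStarDisc_le_general (γ : ℕ → ℝ)
    (hsum : Summable fun j => γ (j + 1)) (δ : ℝ) (hδ : 0 < δ) :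
    ∃ C : ℝ, 0 < C ∧ ∀ N s : ℕ, 0 < N → 1 ≤ s →
      ∃ x : Fin N → Fin s → ℝ, (∀ n j, x n j ∈ Set.Ico (0 : ℝ) 1) ∧
        wStarDisc γ x ≤ C * ((N : ℝ) ^ (1 - δ))⁻¹ := by
  obtain ⟨C, hC, hgrowth⟩ := exists_add_one_mul_prod_le_exp (fun _ => abs_nonneg _) hsum.abs hδ
  refine ⟨C * Real.exp (δ * 3), by positivity, fun N s hN _ => ?_⟩
  obtain ⟨q, hq, hNq, hq2⟩ := Nat.exists_prime_lt_and_le_two_mul N hN.ne'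
  have : Fact q.Prime := ⟨hq⟩
  obtain ⟨z, hz⟩ := exists_wStarDisc_latticePoint_le (s := s) hN hNq.le γ
  refine ⟨latticePoint N z, latticePoint_mem_Ico z, hz.trans ?_⟩
  have hN' : (0 : ℝ) < N := by exact_mod_cast hN
  have hlog : 2 + Real.log q ≤ 3 + Real.log N := by
    have hle : Real.log q ≤ Real.log (2 * N) :=
      Real.log_le_log (by exact_mod_cast hq.pos) (by exact_mod_cast hq2)
    rw [Real.log_mul two_ne_zero hN'.ne'] at hle
    linarith [Real.log_two_lt_d9]
  calc _ ≤ C * Real.exp (δ * (2 + Real.log q)) / N := by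
        have hL : 0 ≤ 2 + Real.log q := add_nonneg zero_le_two (Real.log_natCast_nonneg q)
        exact div_le_div_of_nonneg_right (hgrowth (range s) _ hL) hN'.le
    _ ≤ C * Real.exp (δ * (3 + Real.log N)) / N := by gcongr
    _ = C * Real.exp (δ * 3) * ((N : ℝ) ^ (1 - δ))⁻¹ := by
        rw [mul_add, Real.exp_add, mul_comm δ (Real.log N), ← Real.rpow_def_of_pos hN',
          Real.rpow_sub hN', Real.rpow_one, inv_div]
        ring

end WeightedStarDiscrepancy

/-- for summable nonnegative weights and any `δ > 0` there is `C > 0`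
such that for every prime `p`, every `m ≥ 1` and every `s ≥ 1` there is a `p^m`-element
point set in `[0,1)^s` with weighted star-discrepancy at most `C p^{-m(1-δ)}`. -/
theorem exists_point_set_wStarDisc_le (γ : ℕ → ℝ) (hγ : ∀ j, 1 ≤ j → 0 ≤ γ j)
    (hsum : Summable fun j => γ (j + 1)) (δ : ℝ) (hδ : 0 < δ) :
    ∃ C : ℝ, 0 < C ∧ ∀ p m s : ℕ, p.Prime → 1 ≤ m → 1 ≤ s →
      ∃ x : Fin (p ^ m) → Fin s → ℝ, (∀ n j, x n j ∈ Set.Ico (0:ℝ) 1) ∧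
        wStarDisc γ x ≤ C * ((p : ℝ) ^ ((m : ℝ) * (1 - δ)))⁻¹ := by
  obtain ⟨C, hC, h⟩ := exists_point_set_wStarDisc_le_general γ hsum δ hδ
  refine ⟨C, hC, fun p m s hp _ hs => ?_⟩
  simpa only [Real.rpow_natCast_mul p.cast_nonneg, Nat.cast_pow] using
    h (p ^ m) s (pow_pos hp.pos m) hs
end
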